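/- Let G = (V,E,w,μ) be a finite weighted graph with |V| ≥ 3, zero potential, vertex measure μ_i = d(i) for all i, and such that (V,E) is not a complete graph. Then for every 1 ≤ k ≤ n, ρ_k(G) ≥ (1 − 1/k) · min{λ_2(G), 2 − λ_n(G)}, where λ_1(G) ≤ … ≤ λ_n(G) are the eigenvalues of the normalized Laplacian of G. -/

import Mathlib

open BigOperators Matrix Polynomial

/-- Conductance of a vertex subset `A`: boundary weight divided by its measure. -/
noncomputable def conductance {V : Type*} [Fintype V] [DecidableEq V]
    (w : V → V → ℝ) (μ : V → ℝ) (A : Finset V) : ℝ :=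
  (∑ i ∈ A, ∑ j ∈ Aᶜ, w i j) / (∑ i ∈ A, μ i)

/-- The `k`-way Cheeger constant: infimum over `k`-tuples of pairwise disjoint
nonempty vertex subsets of the maximal conductance. -/
noncomputable def cheeger {V : Type*} [Fintype V] [DecidableEq V]
    (k : ℕ) (w : V → V → ℝ) (μ : V → ℝ) : ℝ :=
  sInf {r | ∃ A : Fin k → Finset V, (∀ i, (A i).Nonempty) ∧
    Pairwise (Function.onFun Disjoint A) ∧ r = ⨆ i, conductance w μ (A i)}

/-- Weighted degree `d(i) = ∑_j w_{ij}` (with `w` vanishing off edges). -/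
noncomputable def wdeg {V : Type*} [Fintype V] (w : V → V → ℝ) (i : V) : ℝ := ∑ j, w i j

/-- The normalized Laplacian `𝔏 = M⁻¹ (D - A)` for the vertex measure `μ = d`. -/
noncomputable def normLapDeg {V : Type*} [Fintype V] [DecidableEq V]
    (w : V → V → ℝ) : Matrix V V ℝ :=
  (Matrix.diagonal (wdeg w))⁻¹ * (Matrix.diagonal (wdeg w) - Matrix.of w)

/-!
The argument gives `ρ_k ≥ (1 - 1/k) λ₂`. If `λ₂ > 0`, the Poincaré inequality `λ₂ Var_d(f) ≤ E(f)`,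
which is the min-max principle for `D^{-1/2} (D - A) D^{-1/2}` with ground state `√d`, applied to
the indicator function of `A` reads `λ₂ vol(A) (1 - vol(A) / vol(V)) ≤ w(A, Aᶜ)`. Among `k` disjoint
sets one has volume at most `vol(V) / k`, and its conductance is at least `(1 - 1/k) λ₂`.
-/

section SpectralGap

variable {𝕜 : Type*} [RCLike 𝕜]

section OrthonormalEigenbasis

variable {E ι : Type*} [NormedAddCommGroup E] [InnerProductSpace 𝕜 E] [Fintype ι]
  {T : E →ₗ[𝕜] E} {b : OrthonormalBasis ι 𝕜 E} {μ : ι → ℝ}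

lemma inner_eigenbasis_map (hT : ∀ i, T (b i) = (μ i : 𝕜) • b i) (x : E) (i : ι) :
    inner 𝕜 (b i) (T x) = μ i * inner 𝕜 (b i) x := by
  classical
  conv_lhs => rw [← b.sum_repr' x, map_sum]
  simp [inner_sum, inner_smul_right, hT, b.inner_eq_ite, mul_comm]

lemma re_inner_map_self_eq_sum (hT : ∀ i, T (b i) = (μ i : 𝕜) • b i) (x : E) :
    RCLike.re (inner 𝕜 x (T x)) = ∑ i, μ i * ‖inner 𝕜 (b i) x‖ ^ 2 := by
  rw [← b.sum_inner_mul_inner x (T x), map_sum]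
  refine Finset.sum_congr rfl fun i _ => ?_
  rw [inner_eigenbasis_map hT, mul_left_comm, RCLike.re_ofReal_mul, inner_mul_symm_re_eq_norm,
    norm_mul, norm_inner_symm, sq]

lemma mul_norm_sq_le_re_inner_map_self {t : ℝ} {x : E} (hT : ∀ i, T (b i) = (μ i : 𝕜) • b i)
    (hx : ∀ i, μ i < t → inner 𝕜 (b i) x = 0) :
    t * ‖x‖ ^ 2 ≤ RCLike.re (inner 𝕜 x (T x)) := by
  rw [re_inner_map_self_eq_sum hT, ← b.sum_sq_norm_inner_right, Finset.mul_sum]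
  refine Finset.sum_le_sum fun i _ => ?_
  rcases lt_or_ge (μ i) t with hi | hi
  · simp [hx i hi]
  · gcongr

lemma inner_eigenbasis_eq_zero_of_inner_eq_zero {t σ : ℝ} {s y : E}
    (hT : ∀ i, T (b i) = (μ i : 𝕜) • b i) (hμ : {i | μ i < t}.Subsingleton)
    (hs : s ≠ 0) (hTs : T s = (σ : 𝕜) • s) (hσ : σ < t) (hsy : inner 𝕜 s y = 0)
    {i : ι} (hi : μ i < t) : inner 𝕜 (b i) y = 0 := by
  have hs_inner : ∀ j ≠ i, inner 𝕜 (b j) s = 0 := by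
    intro j hj
    have hμj : t ≤ μ j := not_lt.mp fun h => hj (hμ h hi)
    have h : ((μ j : 𝕜) - σ) * inner 𝕜 (b j) s = 0 := by
      rw [sub_mul, ← inner_eigenbasis_map hT, hTs, inner_smul_right, sub_self]
    refine (mul_eq_zero.mp h).resolve_left ?_
    exact_mod_cast (sub_pos.mpr (hσ.trans_le hμj)).ne'
  have hs_eq : s = inner 𝕜 (b i) s • b i := by
    conv_lhs => rw [← b.sum_repr' s]
    exact Fintype.sum_eq_single i fun j hj => by rw [hs_inner j hj, zero_smul]
  rw [hs_eq, inner_smul_left] at hsy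
  refine (mul_eq_zero.mp hsy).resolve_left fun h => hs ?_
  rw [hs_eq, (map_eq_zero _).mp h, zero_smul]

end OrthonormalEigenbasis

variable {V : Type*} [Fintype V] [DecidableEq V] {n : ℕ} {lam : Fin n → ℝ} {N : Matrix V V 𝕜}

lemma card_filter_eigenvalues_lt_le (hN : N.IsHermitian) (hmono : Monotone lam)
    (hchar : N.charpoly = ∏ i, (X - C (lam i : 𝕜))) (k : Fin n) :
    (Finset.univ.filter fun v => hN.eigenvalues v < lam k).card ≤ k := by
  have hroots : Finset.univ.val.map hN.eigenvalues = Finset.univ.val.map lam := by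
    apply Multiset.map_injective (RCLike.ofReal_injective (K := 𝕜))
    rw [Multiset.map_map, Multiset.map_map, ← hN.roots_charpoly_eq_eigenvalues, hchar,
      ← roots_multiset_prod_X_sub_C (Finset.univ.val.map (RCLike.ofReal ∘ lam)), Multiset.map_map]
    rfl
  have hcount := congrArg (Multiset.countP (· < lam k)) hroots
  simp only [Multiset.countP_map] at hcount
  calc (Finset.univ.filter fun v => hN.eigenvalues v < lam k).card
      = (Finset.univ.filter fun i => lam i < lam k).card := hcount
    _ ≤ (Finset.Iio k).card := Finset.card_le_card fun i hi =>
        Finset.mem_Iio.mpr (hmono.reflect_lt (Finset.mem_filter.mp hi).2)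
    _ = k := Fin.card_Iio k

lemma second_eigenvalue_mul_norm_sq_le (hN : N.IsHermitian) (hmono : Monotone lam)
    (hchar : N.charpoly = ∏ i, (X - C (lam i : 𝕜))) (hn : 1 < n) {σ : ℝ} (hσ : σ < lam ⟨1, hn⟩)
    {s y : EuclideanSpace 𝕜 V} (hs : s ≠ 0) (hNs : N.toEuclideanLin s = (σ : 𝕜) • s)
    (hsy : inner 𝕜 s y = 0) :
    lam ⟨1, hn⟩ * ‖y‖ ^ 2 ≤ RCLike.re (inner 𝕜 y (N.toEuclideanLin y)) := by
  have hT : ∀ v, N.toEuclideanLin (hN.eigenvectorBasis v) =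
      (hN.eigenvalues v : 𝕜) • hN.eigenvectorBasis v := fun v => by
    rw [toLpLin_apply, hN.mulVec_eigenvectorBasis, RCLike.real_smul_eq_coe_smul (K := 𝕜),
      WithLp.toLp_smul, WithLp.toLp_ofLp]
  have hlow : {v | hN.eigenvalues v < lam ⟨1, hn⟩}.Subsingleton := by
    have hcard := card_filter_eigenvalues_lt_le hN hmono hchar ⟨1, hn⟩
    exact fun u hu v hv => Finset.card_le_one.mp hcard u (by simpa using hu) v (by simpa using hv)
  exact mul_norm_sq_le_re_inner_map_self hT fun v hv =>
    inner_eigenbasis_eq_zero_of_inner_eq_zero hT hlow hs hNs hσ hsy hv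

end SpectralGap

section WeightedMean

variable {V 𝕜 : Type*} [Fintype V] [Field 𝕜] {p f : V → 𝕜}

lemma sum_mul_sub_mean (hp : ∑ i, p i ≠ 0) :
    ∑ i, p i * (f i - (∑ j, p j * f j) / ∑ j, p j) = 0 := by
  simp only [mul_sub, Finset.sum_sub_distrib, ← Finset.sum_mul, mul_div_cancel₀ _ hp, sub_self]

lemma sum_mul_sub_mean_sq (hp : ∑ i, p i ≠ 0) :
    ∑ i, p i * (f i - (∑ j, p j * f j) / ∑ j, p j) ^ 2 =
      ∑ i, p i * f i ^ 2 - (∑ i, p i * f i) ^ 2 / ∑ i, p i := by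
  set m := (∑ j, p j * f j) / ∑ j, p j with hm
  calc ∑ i, p i * (f i - m) ^ 2
      = ∑ i, (p i * f i ^ 2 - m * (p i * f i) - m * (p i * (f i - m))) :=
        Finset.sum_congr rfl fun i _ => by ring
    _ = ∑ i, p i * f i ^ 2 - m * ∑ i, p i * f i - m * ∑ i, p i * (f i - m) := by
        simp only [Finset.sum_sub_distrib, Finset.mul_sum]
    _ = ∑ i, p i * f i ^ 2 - (∑ i, p i * f i) ^ 2 / ∑ i, p i := by
        rw [sum_mul_sub_mean hp, hm]
        ring

end WeightedMean

section WeightedGraph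

variable {V : Type*} [Fintype V] {w : V → V → ℝ}

/-- The Dirichlet energy `½ ∑ w_{ij} (f i - f j)²` of a function on a weighted graph, equal to the
cut weight on indicator functions. The factor `½` compensates for summing over ordered pairs. -/
noncomputable def dirichletEnergy (w : V → V → ℝ) (f : V → ℝ) : ℝ :=
  (∑ i, ∑ j, w i j * (f i - f j) ^ 2) / 2

lemma dirichletEnergy_sub_const (f : V → ℝ) (c : ℝ) :
    dirichletEnergy w (fun i => f i - c) = dirichletEnergy w f := by
  simp only [dirichletEnergy, sub_sub_sub_cancel_right]

variable [DecidableEq V]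

lemma dirichletEnergy_ite_mem (hsymm : ∀ i j, w i j = w j i) (A : Finset V) :
    dirichletEnergy w (fun i => if i ∈ A then 1 else 0) = ∑ i ∈ A, ∑ j ∈ Aᶜ, w i j := by
  have hin : ∀ i ∈ A, ∑ j, w i j * ((if i ∈ A then 1 else 0) - if j ∈ A then 1 else 0) ^ 2 =
      ∑ j ∈ Aᶜ, w i j := fun i hi => by
    rw [← Finset.sum_add_sum_compl A, Finset.sum_eq_zero, zero_add]
    · exact Finset.sum_congr rfl fun j hj => by simp [hi, Finset.mem_compl.mp hj]
    · exact fun j hj => by simp [hi, hj]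
  have hout : ∀ i ∈ Aᶜ, ∑ j, w i j * ((if i ∈ A then 1 else 0) - if j ∈ A then 1 else 0) ^ 2 =
      ∑ j ∈ A, w i j := fun i hi => by
    rw [← Finset.sum_add_sum_compl A, add_comm, Finset.sum_eq_zero, zero_add]
    · exact Finset.sum_congr rfl fun j hj => by simp [Finset.mem_compl.mp hi, hj]
    · exact fun j hj => by simp [Finset.mem_compl.mp hi, Finset.mem_compl.mp hj]
  rw [dirichletEnergy, ← Finset.sum_add_sum_compl A, Finset.sum_congr rfl hin,
    Finset.sum_congr rfl hout, Finset.sum_comm (s := Aᶜ)]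
  simp only [hsymm, add_self_div_two]

/-- The unnormalized Laplacian `D - A` of a weighted graph, whose quadratic form is the Dirichlet
energy. -/
noncomputable def weightedLap (w : V → V → ℝ) : Matrix V V ℝ :=
  diagonal (wdeg w) - of w

lemma isHermitian_weightedLap (hsymm : ∀ i j, w i j = w j i) : (weightedLap w).IsHermitian :=
  (isHermitian_diagonal _).sub (IsHermitian.ext fun i j => hsymm j i)

lemma weightedLap_mulVec_apply (f : V → ℝ) (i : V) :
    (weightedLap w *ᵥ f) i = wdeg w i * f i - ∑ j, w i j * f j := by
  rw [weightedLap, sub_mulVec, Pi.sub_apply, mulVec_diagonal]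
  rfl

lemma weightedLap_mulVec_one : weightedLap w *ᵥ 1 = 0 := by
  ext i
  rw [weightedLap_mulVec_apply]
  simp [wdeg]

lemma dotProduct_weightedLap_mulVec (hsymm : ∀ i j, w i j = w j i) (f : V → ℝ) :
    f ⬝ᵥ weightedLap w *ᵥ f = dirichletEnergy w f := by
  have hdeg : ∑ i, ∑ j, w i j * f i ^ 2 = ∑ i, wdeg w i * f i ^ 2 := by
    simp only [wdeg, Finset.sum_mul]
  have hswap : ∑ i, ∑ j, w i j * f j ^ 2 = ∑ i, wdeg w i * f i ^ 2 := by
    rw [Finset.sum_comm, ← hdeg]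
    simp only [hsymm]
  have hcross : ∑ i, f i * ∑ j, w i j * f j = ∑ i, ∑ j, w i j * (f i * f j) := by
    simp only [Finset.mul_sum, mul_left_comm]
  calc f ⬝ᵥ weightedLap w *ᵥ f
      = ∑ i, wdeg w i * f i ^ 2 - ∑ i, f i * ∑ j, w i j * f j := by
        rw [dotProduct, ← Finset.sum_sub_distrib]
        exact Finset.sum_congr rfl fun i _ => by rw [weightedLap_mulVec_apply]; ring
    _ = (∑ i, ∑ j, w i j * f i ^ 2 + ∑ i, ∑ j, w i j * f j ^ 2 -
          2 * ∑ i, ∑ j, w i j * (f i * f j)) / 2 := by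
        rw [hdeg, hswap, hcross]; ring
    _ = dirichletEnergy w f := by
        simp only [dirichletEnergy, Finset.mul_sum, ← Finset.sum_add_distrib,
          ← Finset.sum_sub_distrib]
        congr! 3
        ring

/-- The symmetric normalized Laplacian `D^{-1/2} (D - A) D^{-1/2}`, similar to
`D⁻¹ (D - A)` and Hermitian for the standard inner product, so the spectral theorem applies. -/
noncomputable def symmNormLap (w : V → V → ℝ) : Matrix V V ℝ :=
  diagonal (fun i => (√(wdeg w i))⁻¹) * weightedLap w * diagonal (fun i => (√(wdeg w i))⁻¹)

lemma isHermitian_symmNormLap (hsymm : ∀ i j, w i j = w j i) : (symmNormLap w).IsHermitian := by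
  have h := isHermitian_mul_mul_conjTranspose (diagonal fun i => (√(wdeg w i))⁻¹)
    (isHermitian_weightedLap hsymm)
  rwa [(isHermitian_diagonal _).eq] at h

lemma charpoly_symmNormLap (hd : ∀ i, 0 < wdeg w i) :
    (symmNormLap w).charpoly = (normLapDeg w).charpoly := by
  have hinv : (diagonal (wdeg w))⁻¹ =
      diagonal (fun i => (√(wdeg w i))⁻¹) * diagonal (fun i => (√(wdeg w i))⁻¹) := by
    refine inv_eq_right_inv ?_
    rw [diagonal_mul_diagonal, diagonal_mul_diagonal, ← diagonal_one]
    congr 1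
    ext i
    rw [← mul_inv, Real.mul_self_sqrt (hd i).le, mul_inv_cancel₀ (hd i).ne']
  rw [symmNormLap, charpoly_mul_comm, ← Matrix.mul_assoc, ← hinv, normLapDeg, weightedLap]

lemma symmNormLap_mulVec_sqrt_mul (hd : ∀ i, 0 < wdeg w i) (f : V → ℝ) :
    symmNormLap w *ᵥ (fun i => √(wdeg w i) * f i) =
      fun i => (√(wdeg w i))⁻¹ * (weightedLap w *ᵥ f) i := by
  have hf : diagonal (fun i => (√(wdeg w i))⁻¹) *ᵥ (fun i => √(wdeg w i) * f i) = f := by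
    ext i
    rw [mulVec_diagonal, inv_mul_cancel_left₀ (Real.sqrt_pos.mpr (hd i)).ne']
  ext i
  rw [symmNormLap, ← mulVec_mulVec, hf, ← mulVec_mulVec, mulVec_diagonal]

lemma dotProduct_symmNormLap_mulVec (hsymm : ∀ i j, w i j = w j i) (hd : ∀ i, 0 < wdeg w i)
    (f : V → ℝ) :
    (fun i => √(wdeg w i) * f i) ⬝ᵥ symmNormLap w *ᵥ (fun i => √(wdeg w i) * f i) =
      dirichletEnergy w f := by
  rw [symmNormLap_mulVec_sqrt_mul hd, ← dotProduct_weightedLap_mulVec hsymm]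
  refine Finset.sum_congr rfl fun i _ => ?_
  have := (Real.sqrt_pos.mpr (hd i)).ne'
  field_simp

variable {n : ℕ} {lam : Fin n → ℝ}

lemma second_eigenvalue_mul_sum_sq_le_dirichletEnergy [Nonempty V]
    (hsymm : ∀ i j, w i j = w j i) (hd : ∀ i, 0 < wdeg w i) (hmono : Monotone lam)
    (hchar : (normLapDeg w).charpoly = ∏ i, (X - C (lam i))) (hn : 1 < n)
    (hgap : 0 < lam ⟨1, hn⟩) {f : V → ℝ} (hf : ∑ i, wdeg w i * f i = 0) :
    lam ⟨1, hn⟩ * ∑ i, wdeg w i * f i ^ 2 ≤ dirichletEnergy w f := by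
  let s : EuclideanSpace ℝ V := WithLp.toLp 2 fun i => √(wdeg w i) * (1 : V → ℝ) i
  let y : EuclideanSpace ℝ V := WithLp.toLp 2 fun i => √(wdeg w i) * f i
  have hs : s ≠ 0 := fun h => by
    obtain ⟨i⟩ := ‹Nonempty V›
    have hi : √(wdeg w i) * 1 = 0 := congrArg (fun x : EuclideanSpace ℝ V => x i) h
    exact (Real.sqrt_pos.mpr (hd i)).ne' (by simpa using hi)
  have hNs : (symmNormLap w).toEuclideanLin s = (0 : ℝ) • s := by
    rw [toLpLin_toLp, toLin'_apply, symmNormLap_mulVec_sqrt_mul hd, weightedLap_mulVec_one,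
      zero_smul]
    ext i
    simp
  have hsy : inner ℝ s y = 0 := by
    rw [← hf, EuclideanSpace.inner_toLp_toLp]
    refine Finset.sum_congr rfl fun i _ => ?_
    simp only [Pi.star_apply, star_trivial, Pi.one_apply, mul_one]
    rw [mul_right_comm, Real.mul_self_sqrt (hd i).le]
  have hy : ‖y‖ ^ 2 = ∑ i, wdeg w i * f i ^ 2 := by
    simp [y, EuclideanSpace.norm_sq_eq, mul_pow, Real.sq_sqrt (hd _).le]
  have hNy : inner ℝ y ((symmNormLap w).toEuclideanLin y) = dirichletEnergy w f := by
    rw [toLpLin_toLp, toLin'_apply, EuclideanSpace.inner_toLp_toLp, star_trivial,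
      dotProduct_comm, dotProduct_symmNormLap_mulVec hsymm hd]
  rw [← hy, ← hNy]
  exact second_eigenvalue_mul_norm_sq_le (isHermitian_symmNormLap hsymm) hmono
    ((charpoly_symmNormLap hd).trans hchar) hn hgap hs hNs hsy

lemma second_eigenvalue_mul_variance_le_dirichletEnergy [Nonempty V]
    (hsymm : ∀ i j, w i j = w j i) (hd : ∀ i, 0 < wdeg w i) (hmono : Monotone lam)
    (hchar : (normLapDeg w).charpoly = ∏ i, (X - C (lam i))) (hn : 1 < n)
    (hgap : 0 < lam ⟨1, hn⟩) (f : V → ℝ) :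
    lam ⟨1, hn⟩ * (∑ i, wdeg w i * f i ^ 2 - (∑ i, wdeg w i * f i) ^ 2 / ∑ i, wdeg w i) ≤
      dirichletEnergy w f := by
  have hD : ∑ i, wdeg w i ≠ 0 := (Finset.sum_pos (fun i _ => hd i) Finset.univ_nonempty).ne'
  rw [← sum_mul_sub_mean_sq hD,
    ← dirichletEnergy_sub_const f ((∑ i, wdeg w i * f i) / ∑ i, wdeg w i)]
  exact second_eigenvalue_mul_sum_sq_le_dirichletEnergy hsymm hd hmono hchar hn hgap
    (sum_mul_sub_mean hD)

lemma one_sub_volume_ratio_mul_second_eigenvalue_le_conductance (hsymm : ∀ i j, w i j = w j i)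
    (hd : ∀ i, 0 < wdeg w i) (hmono : Monotone lam)
    (hchar : (normLapDeg w).charpoly = ∏ i, (X - C (lam i))) (hn : 1 < n)
    (hgap : 0 < lam ⟨1, hn⟩) {A : Finset V} (hA : A.Nonempty) :
    (1 - (∑ i ∈ A, wdeg w i) / ∑ i, wdeg w i) * lam ⟨1, hn⟩ ≤ conductance w (wdeg w) A := by
  have : Nonempty V := hA.to_type
  rw [conductance, le_div_iff₀ (Finset.sum_pos (fun i _ => hd i) hA),
    ← dirichletEnergy_ite_mem hsymm]
  have h := second_eigenvalue_mul_variance_le_dirichletEnergy hsymm hd hmono hchar hn hgap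
    fun i => if i ∈ A then 1 else 0
  simp only [ite_pow, one_pow, ne_eq, OfNat.ofNat_ne_zero, not_false_eq_true, zero_pow, mul_ite,
    mul_one, mul_zero, Finset.sum_ite_mem, Finset.univ_inter] at h
  linear_combination h

end WeightedGraph

section Cheeger

variable {V : Type*} [Fintype V] {w : V → V → ℝ} {μ : V → ℝ} {k : ℕ}

lemma exists_sum_le_sum_univ_div_card {ι : Type*} [Fintype ι] [Nonempty ι] (hμ : ∀ v, 0 ≤ μ v)
    {A : ι → Finset V} (hA : Pairwise (Function.onFun Disjoint A)) :
    ∃ i, ∑ v ∈ A i, μ v ≤ (∑ v, μ v) / Fintype.card ι := by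
  classical
  have htotal : ∑ i, ∑ v ∈ A i, μ v ≤ ∑ _i : ι, (∑ v, μ v) / Fintype.card ι := by
    rw [← Finset.sum_biUnion fun i _ j _ hij => hA hij, Finset.sum_const, Finset.card_univ,
      nsmul_eq_mul, mul_div_cancel₀ _ (Nat.cast_ne_zero.mpr Fintype.card_ne_zero)]
    exact Finset.sum_le_univ_sum_of_nonneg hμ
  obtain ⟨i, -, hi⟩ := Finset.exists_le_of_sum_le Finset.univ_nonempty htotal
  exact ⟨i, hi⟩

variable [DecidableEq V]

lemma conductance_nonneg (hw : ∀ i j, 0 ≤ w i j) (hμ : ∀ i, 0 ≤ μ i) (A : Finset V) :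
    0 ≤ conductance w μ A :=
  div_nonneg (Finset.sum_nonneg fun i _ => Finset.sum_nonneg fun j _ => hw i j)
    (Finset.sum_nonneg fun i _ => hμ i)

lemma cheeger_nonneg (hw : ∀ i j, 0 ≤ w i j) (hμ : ∀ i, 0 ≤ μ i) : 0 ≤ cheeger k w μ := by
  refine Real.sInf_nonneg ?_
  rintro _ ⟨A, -, -, rfl⟩
  exact Real.iSup_nonneg fun i => conductance_nonneg hw hμ (A i)

lemma le_cheeger {c : ℝ} (hk : k ≤ Fintype.card V)
    (h : ∀ A : Fin k → Finset V, (∀ i, (A i).Nonempty) → Pairwise (Function.onFun Disjoint A) →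
      ∃ i, c ≤ conductance w μ (A i)) :
    c ≤ cheeger k w μ := by
  refine le_csInf ?_ ?_
  · obtain ⟨e⟩ : Nonempty (Fin k ↪ V) := Function.Embedding.nonempty_of_card_le (by simpa using hk)
    exact ⟨_, fun i => {e i}, fun i => Finset.singleton_nonempty _,
      fun i j hij => Finset.disjoint_singleton.mpr (e.injective.ne hij), rfl⟩
  · rintro _ ⟨A, hA, hdisj, rfl⟩
    obtain ⟨i, hi⟩ := h A hA hdisj
    exact le_ciSup_of_le (Set.finite_range _).bddAbove i hi

theorem cheeger_lower_bound_normalized_general {n : ℕ} (hn : 1 < n)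
    (hsymm : ∀ i j, w i j = w j i) (hw : ∀ i j, 0 ≤ w i j) (hd : ∀ i, 0 < wdeg w i)
    {lam : Fin n → ℝ} (hmono : Monotone lam)
    (hchar : (normLapDeg w).charpoly = ∏ i, (X - C (lam i)))
    (hk₁ : 0 < k) (hk₂ : k ≤ Fintype.card V) :
    (1 - 1 / (k : ℝ)) * lam ⟨1, hn⟩ ≤ cheeger k w (wdeg w) := by
  rcases le_or_gt (lam ⟨1, hn⟩) 0 with hgap | hgap
  · exact (mul_nonpos_of_nonneg_of_nonpos (Nat.one_sub_one_div_cast_nonneg k) hgap).trans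
      (cheeger_nonneg hw fun i => (hd i).le)
  refine le_cheeger hk₂ fun A hA hdisj => ?_
  have : Nonempty (Fin k) := ⟨⟨0, hk₁⟩⟩
  obtain ⟨i, hi⟩ := exists_sum_le_sum_univ_div_card (fun v => (hd v).le) hdisj
  rw [Fintype.card_fin] at hi
  have hD_pos : 0 < ∑ v, wdeg w v :=
    Finset.sum_pos (fun v _ => hd v) ((hA i).mono (Finset.subset_univ _))
  have hratio : (∑ v ∈ A i, wdeg w v) / ∑ v, wdeg w v ≤ 1 / k := by
    rwa [div_le_iff₀ hD_pos, one_div_mul_eq_div]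
  refine ⟨i, le_trans ?_ (one_sub_volume_ratio_mul_second_eigenvalue_le_conductance
    hsymm hd hmono hchar hn hgap (hA i))⟩
  gcongr

end Cheeger

/-- **Spectral lower bound for multi-way Cheeger constants, normalized case.** For a finite
weighted non-complete graph with `|V| ≥ 3`, zero potential and vertex measure `μ = d`, one has
`ρ_k(G) ≥ (1 - 1/k) ⬝ min {λ₂(G), 2 - λ_n(G)}`, where `λ₁ ≤ … ≤ λ_n` are the eigenvalues of
the normalized Laplacian. -/
theorem cheeger_lower_bound_normalized (n : ℕ) (hn : 3 ≤ n)
    (G : SimpleGraph (Fin n)) [DecidableRel G.Adj] (hnc : G ≠ ⊤)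
    (w : Fin n → Fin n → ℝ) (hsymm : ∀ i j, w i j = w j i)
    (hpos : ∀ i j, G.Adj i j → 0 < w i j) (hzero : ∀ i j, ¬ G.Adj i j → w i j = 0)
    (hd : ∀ i, 0 < wdeg w i)
    (lam : Fin n → ℝ) (hmono : Monotone lam)
    (hchar : (normLapDeg w).charpoly = ∏ i, (X - C (lam i)))
    (k : ℕ) (hk₁ : 1 ≤ k) (hk₂ : k ≤ n) :
    (1 - 1 / (k : ℝ)) * min (lam ⟨1, by omega⟩) (2 - lam ⟨n - 1, by omega⟩) ≤
      cheeger k w (wdeg w) := by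
  have hw : ∀ i j, 0 ≤ w i j := fun i j =>
    (em (G.Adj i j)).elim (fun h => (hpos i j h).le) fun h => (hzero i j h).ge
  exact (mul_le_mul_of_nonneg_left (min_le_left _ _) (Nat.one_sub_one_div_cast_nonneg k)).trans
    (cheeger_lower_bound_normalized_general (by omega) hsymm hw hd hmono hchar hk₁ (by simpa))
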